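/- arXiv:1801.04404 — 3 statements merged into one kernel-verified Lean document; each statement's English description precedes it below -/
import Mathlib

section
/- For all numbers ξ, d > 0 there exists a constant C₃ = C₃(ξ,d) > 0 such that for every λ > 1 and every real-valued function w ∈ C²[−ξ,d] satisfying w(−ξ) = 0 and w'(−ξ) = 0, the one-dimensional Carleman estimate holds: ∫_{−ξ}^{d} (w''(z))² e^{−2λz} dz ≥ C₃ [ ∫_{−ξ}^{d} (w''(z))² e^{−2λz} dz + λ ∫_{−ξ}^{d} (w'(z))² e^{−2λz} dz + λ³ ∫_{−ξ}^{d} (w(z))² e^{−2λz} dz ]. -/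
/-!
The estimate holds with `C₃ = 1/3`, independently of `ξ` and `d`. For a `C¹` function `u` with
`u a = 0`, the pointwise identity
`(u')² e - l² u² e - l (u² e)' = (u' - l u)² e ≥ 0`, where `e = exp (-2 l z)`,
integrates over `[a, b]` to `l² ∫ u² e ≤ ∫ (u')² e`, because the boundary term `l u(b)² e(b)` is
nonnegative (`carleman_first_order`). Applying this to `w'` and to `w` bounds `l² ∫ (w')² e` and
`l⁴ ∫ w² e` by `∫ (w'')² e`, and for `l > 1` these dominate the terms with `l` and `l³`.
-/

open MeasureTheory Real

noncomputable section

/-- First-order Carleman inequality. Only nonnegativity of the boundary term at `b` is used, so no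
condition is imposed there. -/
theorem carleman_first_order {a b l : ℝ} (hab : a ≤ b) (hl : 0 < l) {u u' : ℝ → ℝ}
    (hu : ∀ z ∈ Set.Icc a b, HasDerivWithinAt u (u' z) (Set.Icc a b) z)
    (hu' : ContinuousOn u' (Set.Icc a b)) (h0 : u a = 0) :
    l ^ 2 * (∫ z in Set.Icc a b, (u z) ^ 2 * Real.exp (-2 * l * z)) ≤
      ∫ z in Set.Icc a b, (u' z) ^ 2 * Real.exp (-2 * l * z) := by
  have huc : ContinuousOn u (Set.Icc a b) := fun z hz => (hu z hz).continuousWithinAt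
  have he : ContinuousOn (fun z : ℝ => Real.exp (-2 * l * z)) (Set.Icc a b) := by fun_prop
  have hder : ∀ z ∈ Set.Ioo a b, HasDerivAt (fun z => u z ^ 2 * Real.exp (-2 * l * z))
      (2 * (u z * u' z - l * u z ^ 2) * Real.exp (-2 * l * z)) z := by
    intro z hz
    have h1 := (hu z (Set.Ioo_subset_Icc_self hz)).hasDerivAt (Icc_mem_nhds hz.1 hz.2)
    have h2 : HasDerivAt (fun z : ℝ => Real.exp (-2 * l * z))
        (Real.exp (-2 * l * z) * (-2 * l * 1)) z :=
      ((hasDerivAt_id z).const_mul (-2 * l)).exp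
    refine ((h1.pow 2).mul h2).congr_deriv ?_
    simp only [Pi.pow_apply]
    push_cast
    ring
  have hgc : ContinuousOn (fun z => 2 * (u z * u' z - l * u z ^ 2) * Real.exp (-2 * l * z))
      (Set.Icc a b) := by fun_prop
  have hftc := intervalIntegral.integral_eq_sub_of_hasDerivAt_of_le hab
    ((huc.pow 2).mul he) hder (hgc.intervalIntegrable_of_Icc hab)
  rw [intervalIntegral.integral_of_le hab, ← integral_Icc_eq_integral_Ioc] at hftc
  have hbd : 0 ≤ ∫ z in Set.Icc a b,
      2 * (u z * u' z - l * u z ^ 2) * Real.exp (-2 * l * z) := by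
    rw [hftc]
    simp only [Pi.mul_apply, Pi.pow_apply, h0]
    have := Real.exp_pos (-2 * l * b)
    nlinarith [mul_nonneg (sq_nonneg (u b)) this.le]
  have hi1 : IntegrableOn (fun z => u z ^ 2 * Real.exp (-2 * l * z)) (Set.Icc a b) :=
    ((huc.pow 2).mul he).integrableOn_Icc
  have hi2 : IntegrableOn (fun z => u' z ^ 2 * Real.exp (-2 * l * z)) (Set.Icc a b) :=
    ((hu'.pow 2).mul he).integrableOn_Icc
  have hmono : ∫ z in Set.Icc a b, (l ^ 2 * (u z ^ 2 * Real.exp (-2 * l * z)) +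
      l * (2 * (u z * u' z - l * u z ^ 2) * Real.exp (-2 * l * z))) ≤
      ∫ z in Set.Icc a b, u' z ^ 2 * Real.exp (-2 * l * z) := by
    refine integral_mono ((hi1.const_mul _).add (hgc.integrableOn_Icc.const_mul _)) hi2 ?_
    intro z
    have := mul_nonneg (sq_nonneg (u' z - l * u z)) (Real.exp_pos (-2 * l * z)).le
    dsimp only
    linarith
  rw [integral_add (hi1.const_mul _) (hgc.integrableOn_Icc.const_mul _),
    integral_const_mul, integral_const_mul] at hmono
  nlinarith [mul_nonneg hl.le hbd]

/-- The 1D Carleman estimate with the weight `ψ_λ(z) = e^{−2λz}` on `[−ξ,d]`. -/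
theorem carleman_estimate_1d (ξ d : ℝ) (hξ : 0 < ξ) (hd : 0 < d) :
    ∃ C₃ : ℝ, 0 < C₃ ∧
      ∀ l : ℝ, 1 < l →
        ∀ w : ℝ → ℝ, ContDiffOn ℝ 2 w (Set.Icc (-ξ) d) →
          w (-ξ) = 0 → derivWithin w (Set.Icc (-ξ) d) (-ξ) = 0 →
          (∫ z in Set.Icc (-ξ) d,
              (iteratedDerivWithin 2 w (Set.Icc (-ξ) d) z) ^ 2 * Real.exp (-2 * l * z)) ≥
            C₃ * ((∫ z in Set.Icc (-ξ) d,
                  (iteratedDerivWithin 2 w (Set.Icc (-ξ) d) z) ^ 2 * Real.exp (-2 * l * z))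
                + l * (∫ z in Set.Icc (-ξ) d,
                  (derivWithin w (Set.Icc (-ξ) d) z) ^ 2 * Real.exp (-2 * l * z))
                + l ^ 3 * (∫ z in Set.Icc (-ξ) d, (w z) ^ 2 * Real.exp (-2 * l * z))) := by
  have hlt : -ξ < d := by linarith
  refine ⟨1 / 3, by norm_num, fun l hl w hw h0 h1 => ?_⟩
  have hl0 : 0 < l := by linarith
  have hs : UniqueDiffOn ℝ (Set.Icc (-ξ) d) := uniqueDiffOn_Icc hlt
  have h2 : iteratedDerivWithin 2 w (Set.Icc (-ξ) d) =
      derivWithin (derivWithin w (Set.Icc (-ξ) d)) (Set.Icc (-ξ) d) := by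
    rw [iteratedDerivWithin_succ, iteratedDerivWithin_one]
  have hw' : ContDiffOn ℝ 1 (derivWithin w (Set.Icc (-ξ) d)) (Set.Icc (-ξ) d) :=
    hw.derivWithin hs (by norm_num)
  have hA := carleman_first_order hlt.le hl0
    (fun z hz => ((hw'.differentiableOn one_ne_zero) z hz).hasDerivWithinAt)
    (hw'.continuousOn_derivWithin hs le_rfl) h1
  have hB := carleman_first_order hlt.le hl0
    (fun z hz => ((hw.differentiableOn two_ne_zero) z hz).hasDerivWithinAt)
    hw'.continuousOn h0
  have hnn : ∀ f : ℝ → ℝ, 0 ≤ ∫ z in Set.Icc (-ξ) d, f z ^ 2 * Real.exp (-2 * l * z) :=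
    fun f => integral_nonneg fun z => mul_nonneg (sq_nonneg _) (Real.exp_pos _).le
  rw [h2]
  have hP := hnn (derivWithin w (Set.Icc (-ξ) d))
  have hQ := hnn w
  revert hA hB hP hQ
  generalize (∫ z in Set.Icc (-ξ) d, w z ^ 2 * Real.exp (-2 * l * z)) = Q
  generalize (∫ z in Set.Icc (-ξ) d,
    derivWithin w (Set.Icc (-ξ) d) z ^ 2 * Real.exp (-2 * l * z)) = P
  intro hA hB hP hQ
  have e1 : l * P ≤ l ^ 2 * P := mul_le_mul_of_nonneg_right (by nlinarith) hP
  have e2 : l ^ 3 * Q ≤ l * P := by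
    calc l ^ 3 * Q = l * (l ^ 2 * Q) := by ring
      _ ≤ l * P := mul_le_mul_of_nonneg_left hB hl0.le
  linarith

end
end

section
/- Let H and G be real Hilbert spaces, T : H → G a bounded linear operator, Q ∈ H, and let δ ∈ (0,1). Suppose W* ∈ H and g, g* ∈ G satisfy T W* + g* = 0 and ‖g − g*‖_G ≤ δ. Set α = δ and let W_min be the unique minimizer over H of the functional I(W) = ‖TW + g‖²_G + α‖W + Q‖²_H. Then ‖T(W_min − W*)‖²_G ≤ δ (1 + ‖W* + Q‖²_H) and ‖W_min − W*‖²_H ≤ 1 + ‖W* + Q‖²_H. -/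
/-!
Write `e = Wmin - Wstar`, `n = g - gstar`, `p = Wstar + Q`. Since `T Wstar = -gstar`, the functional at
`Wstar + s • e` is `‖s • T e + n‖² + δ ‖s • e + p‖²`, a quadratic polynomial in `s` minimized at `s = 1`.
Its stationarity there reads `‖T e‖² + δ ‖e‖² = -⟪T e, n⟫ - δ ⟪e, p⟫`, and Young's inequality on the
right-hand side gives `‖T e‖² + δ ‖e‖² ≤ ‖n‖² + δ ‖p‖² ≤ δ² + δ ‖p‖²`, from which both bounds follow
because `δ < 1`.
-/

open RealInnerProductSpace

/-- First-order condition at `s = 1` for a minimizer of `a * s ^ 2 + 2 * b * s`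
(only the inequality needed below). -/
lemma add_nonpos_of_quadratic_min {a b : ℝ} (ha : 0 ≤ a)
    (h : ∀ s : ℝ, a + 2 * b ≤ a * s ^ 2 + 2 * b * s) : a + b ≤ 0 := by
  by_contra! hab
  have ha1 : 0 < a + 1 := by linarith
  -- A step `t > 0` back from `s = 1` changes the value by `t * (a * t - 2 * (a + b))`,
  -- which is negative for this `t`, since `a * t < a + b`.
  obtain ⟨t, ht⟩ : ∃ t, t = (a + b) / (a + 1) := ⟨_, rfl⟩
  have htpos : 0 < t := ht ▸ div_pos hab ha1
  have hmul : t * (a + 1) = a + b := by rw [ht]; field_simp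
  have h1 : 0 ≤ t * (a * t - 2 * (a + b)) := by linarith [h (1 - t)]
  have h2 := nonneg_of_mul_nonneg_right h1 htpos
  linarith

/-- Convergence of the regularized (quasi-reversibility) solution to the exact solution:
if `TW* + g* = 0`, `‖g − g*‖ ≤ δ` and `α = δ`, then the minimizer `W_min` of
`I(W) = ‖TW + g‖² + δ‖W + Q‖²` satisfies `‖T(W_min − W*)‖² ≤ δ(1 + ‖W* + Q‖²)` and
`‖W_min − W*‖² ≤ 1 + ‖W* + Q‖²`. -/
theorem tikhonov_convergence {H G : Type*}
    [NormedAddCommGroup H] [InnerProductSpace ℝ H] [CompleteSpace H]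
    [NormedAddCommGroup G] [InnerProductSpace ℝ G] [CompleteSpace G]
    (T : H →L[ℝ] G) (Q : H) (δ : ℝ) (hδ : δ ∈ Set.Ioo (0 : ℝ) 1)
    (Wstar : H) (g gstar : G)
    (hexact : T Wstar + gstar = 0) (hnoise : ‖g - gstar‖ ≤ δ)
    (Wmin : H)
    (hmin : ∀ W : H,
      ‖T Wmin + g‖ ^ 2 + δ * ‖Wmin + Q‖ ^ 2 ≤ ‖T W + g‖ ^ 2 + δ * ‖W + Q‖ ^ 2) :
    ‖T (Wmin - Wstar)‖ ^ 2 ≤ δ * (1 + ‖Wstar + Q‖ ^ 2) ∧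
      ‖Wmin - Wstar‖ ^ 2 ≤ 1 + ‖Wstar + Q‖ ^ 2 := by
  obtain ⟨hδ0, hδ1⟩ := hδ
  obtain ⟨e, he⟩ : ∃ e, e = Wmin - Wstar := ⟨_, rfl⟩
  obtain ⟨n, hn⟩ : ∃ n, n = g - gstar := ⟨_, rfl⟩
  obtain ⟨p, hp⟩ : ∃ p, p = Wstar + Q := ⟨_, rfl⟩
  have hT : T Wstar = -gstar := eq_neg_of_add_eq_zero_left hexact
  have hval : ∀ s : ℝ, ‖T (Wstar + s • e) + g‖ ^ 2 + δ * ‖Wstar + s • e + Q‖ ^ 2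
      = (‖T e‖ ^ 2 + δ * ‖e‖ ^ 2) * s ^ 2 + 2 * (⟪T e, n⟫ + δ * ⟪e, p⟫) * s
        + (‖n‖ ^ 2 + δ * ‖p‖ ^ 2) := by
    intro s
    have h1 : T (Wstar + s • e) + g = s • T e + n := by
      rw [map_add, map_smul, hT, hn]; abel
    have h2 : Wstar + s • e + Q = s • e + p := by rw [hp]; abel
    rw [h1, h2, norm_add_sq_real, norm_add_sq_real, norm_smul, norm_smul,
      real_inner_smul_left, real_inner_smul_left, mul_pow, mul_pow, Real.norm_eq_abs, sq_abs]
    ring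
  have hfirst := add_nonpos_of_quadratic_min (a := ‖T e‖ ^ 2 + δ * ‖e‖ ^ 2)
    (b := ⟪T e, n⟫ + δ * ⟪e, p⟫) (by positivity) fun s => by
      have hWmin : Wmin = Wstar + (1 : ℝ) • e := by rw [he, one_smul]; abel
      have hs := hmin (Wstar + s • e)
      rw [hWmin, hval, hval] at hs
      linarith
  -- Young's inequality, as nonnegativity of the squares `‖T e + n‖²` and `‖e + p‖²`.
  have hy1 : 0 ≤ ‖T e‖ ^ 2 + 2 * ⟪T e, n⟫ + ‖n‖ ^ 2 := by
    rw [← norm_add_sq_real]; positivity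
  have hy2 : 0 ≤ δ * (‖e‖ ^ 2 + 2 * ⟪e, p⟫ + ‖p‖ ^ 2) := by
    rw [← norm_add_sq_real]; positivity
  have hnsq : ‖n‖ ^ 2 ≤ δ ^ 2 := by rw [hn]; gcongr
  have hδsq : δ ^ 2 ≤ δ := by nlinarith
  have hmain : ‖T e‖ ^ 2 + δ * ‖e‖ ^ 2 ≤ δ * (1 + ‖p‖ ^ 2) := by linarith
  rw [← he, ← hp]
  refine ⟨?_, le_of_mul_le_mul_left ?_ hδ0⟩
  · have : 0 ≤ δ * ‖e‖ ^ 2 := by positivity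
    linarith
  · have : 0 ≤ ‖T e‖ ^ 2 := by positivity
    linarith
end

section
/- Let H be a real Hilbert space, K ⊆ H a nonempty closed convex set, κ > 0 and M > 0, and let J : H → ℝ be Fréchet differentiable with gradient ∇J, satisfying J(y) − J(x) − J'(x)(y − x) ≥ κ ‖y − x‖² for all x, y ∈ K, ‖∇J(x) − ∇J(y)‖ ≤ M ‖x − y‖ for all x, y ∈ K, and J(y) ≥ 0 for all y ∈ K. Let p_min be the unique minimizer of J on K, let P_K be the metric projection onto K, let ω₀ ∈ (0,1) and, for ω ∈ (0,ω₀), r = r(ω) ∈ (0,1) be as in the linear convergence theorem for the gradient projection sequence p_n = P_K( p_{n−1} − ω ∇J(p_{n−1}) ) started at an arbitrary p₀ ∈ K. If p* ∈ K satisfies J(p*) ≤ ε for some ε ≥ 0, then for all n ≥ 1: ‖p* − p_n‖ ≤ √(ε/κ) + rⁿ ‖p_min − p₀‖. -/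
/-!
The minimizer satisfies the variational inequality `J'(p_min)(p* - p_min) ≥ 0`, because `K` is
convex and hence contains the segment from `p_min` to `p*`. Strong convexity at `p_min` then gives
`κ‖p* - p_min‖² ≤ J(p*) - J(p_min) ≤ ε`, using `J(p_min) ≥ 0`. The triangle inequality through
`p_min` and the linear convergence bound conclude.
-/

open RealInnerProductSpace

/-- Convergence of the gradient projection sequence to a point `p*` at which the functional
is small: `‖p* − p_n‖ ≤ √(ε/κ) + rⁿ‖p_min − p₀‖` for all `n ≥ 1`. -/
theorem gradient_projection_convergence_to_exact {H : Type*}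
    [NormedAddCommGroup H] [InnerProductSpace ℝ H] [CompleteSpace H]
    (K : Set H) (hne : K.Nonempty) (hcl : IsClosed K) (hconv : Convex ℝ K)
    (κ M : ℝ) (hκ : 0 < κ) (hM : 0 < M)
    (J : H → ℝ) (J' : H → (H →L[ℝ] ℝ)) (gradJ : H → H)
    (hderiv : ∀ x : H, HasFDerivAt J (J' x) x)
    (hgrad : ∀ x h : H, ⟪gradJ x, h⟫ = J' x h)
    (hsc : ∀ x ∈ K, ∀ y ∈ K, J y - J x - J' x (y - x) ≥ κ * ‖y - x‖ ^ 2)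
    (hlip : ∀ x ∈ K, ∀ y ∈ K, ‖gradJ x - gradJ y‖ ≤ M * ‖x - y‖)
    (hnonneg : ∀ y ∈ K, 0 ≤ J y)
    (P : H → H)
    (hP : ∀ x : H, P x ∈ K ∧ (∀ y ∈ K, ‖x - P x‖ ≤ ‖x - y‖))
    (pmin : H) (hpminK : pmin ∈ K) (hpmin : ∀ y ∈ K, J pmin ≤ J y)
    (ω₀ : ℝ) (hω₀ : ω₀ ∈ Set.Ioo (0 : ℝ) 1) (ω : ℝ) (hω : ω ∈ Set.Ioo (0 : ℝ) ω₀)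
    (r : ℝ) (hr : r ∈ Set.Ioo (0 : ℝ) 1)
    (p₀ : H) (hp₀ : p₀ ∈ K) (p : ℕ → H) (hp0 : p 0 = p₀)
    (hpseq : ∀ n : ℕ, p (n + 1) = P (p n - ω • gradJ (p n)))
    (hlin : ∀ n : ℕ, ‖pmin - p n‖ ≤ r ^ n * ‖pmin - p₀‖)
    (pstar : H) (hpstarK : pstar ∈ K) (ε : ℝ) (hε : 0 ≤ ε) (hJpstar : J pstar ≤ ε) :
    ∀ n : ℕ, 1 ≤ n → ‖pstar - p n‖ ≤ Real.sqrt (ε / κ) + r ^ n * ‖pmin - p₀‖ := by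
  intro n _
  have hopt : 0 ≤ J' pmin (pstar - pmin) :=
    IsLocalMinOn.hasFDerivWithinAt_nonneg
      (show IsMinOn J K pmin from fun y hy => hpmin y hy).localize
      (hderiv pmin).hasFDerivWithinAt
      (sub_mem_posTangentConeAt_of_segment_subset (hconv.segment_subset hpminK hpstarK))
  have hsq : ‖pstar - pmin‖ ^ 2 ≤ ε / κ := by
    rw [le_div_iff₀ hκ]
    linarith [hsc pmin hpminK pstar hpstarK, hnonneg pmin hpminK]
  calc ‖pstar - p n‖ ≤ ‖pstar - pmin‖ + ‖pmin - p n‖ := norm_sub_le_norm_sub_add_norm_sub _ _ _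
    _ ≤ Real.sqrt (ε / κ) + r ^ n * ‖pmin - p₀‖ := add_le_add (Real.le_sqrt_of_sq_le hsq) (hlin n)
end
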